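/- arXiv:2412.03469 — 5 statements merged into one kernel-verified Lean document; each statement's English description precedes it below -/
import Mathlib

section
/- Let T > 0, let α > 1 and a, b > 0 be real numbers with a < (1 - 1/α)·(α·b)^(-1/(α-1)). Let f : [0,T] → ℝ be continuous and nonnegative with f(0) ≤ (α·b)^(-1/(α-1)), and suppose that f(t) ≤ a + b·f(t)^α for every t ∈ [0,T]. Then f(t) ≤ (α/(α-1))·a for every t ∈ [0,T]. -/
/-!
Write `M = (α b) ^ (-1/(α-1))`, so that `b M^(α-1) = 1/α`. For `0 ≤ x ≤ M` this gives
`b x^α ≤ x/α`, hence any value `x ≤ M` of `f` satisfies `x ≤ a + x/α`, i.e. `x ≤ α a/(α-1)`.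
The smallness of `a` says `α a/(α-1) < M`, so `f` never takes the value `M`; as `f 0 ≤ M`,
the intermediate value theorem keeps `f` below `M` on all of `[0,T]`.
-/

/-- Below the threshold, the superlinear inequality `x ≤ a + b x^α` is absorbed into a
linear bound. -/
lemma le_of_le_threshold {a b α x : ℝ} (hα : 1 < α) (hb : 0 < b) (hx : 0 ≤ x)
    (hxM : x ≤ (α * b) ^ (-(1/(α - 1)))) (h : x ≤ a + b * x ^ α) :
    x ≤ (α/(α - 1)) * a := by
  have hα1 : 0 < α - 1 := by linarith
  have hα0 : 0 < α := by linarith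
  have hpow : x ^ (α - 1) ≤ (α * b)⁻¹ := by
    calc x ^ (α - 1) ≤ ((α * b) ^ (-(1/(α - 1)))) ^ (α - 1) :=
          Real.rpow_le_rpow hx hxM hα1.le
      _ = (α * b)⁻¹ := by
          rw [← Real.rpow_mul (by positivity), ← Real.rpow_neg_one]
          congr 1
          field_simp
  have hsplit : x ^ α = x * x ^ (α - 1) := by
    rw [← Real.rpow_one_add' hx (by linarith)]
    congr 1
    ring
  have hbx : b * x ^ α ≤ x / α := by
    calc b * x ^ α = b * x * x ^ (α - 1) := by rw [hsplit]; ring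
      _ ≤ b * x * (α * b)⁻¹ := by gcongr
      _ = x / α := by field_simp
  have hlin : x ≤ a + x / α := by linarith
  have hmul : x * α ≤ a * α + x := by
    calc x * α ≤ (a + x / α) * α := by gcongr
      _ = a * α + x := by field_simp
  rw [div_mul_eq_mul_div, le_div_iff₀ hα1]
  linarith

/-- Bootstrap lemma: if a continuous nonnegative function satisfies
`f t ≤ a + b * f t ^ α` with `a` small and `f 0` below the threshold,
then `f t ≤ (α/(α-1)) * a` on `[0,T]`. -/
theorem stmt0 (T a b α : ℝ) (hT : 0 < T) (hα : 1 < α) (ha : 0 < a) (hb : 0 < b)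
    (hsmall : a < (1 - 1/α) * (α * b) ^ (-(1/(α - 1))))
    (f : ℝ → ℝ) (hcont : ContinuousOn f (Set.Icc 0 T))
    (hnonneg : ∀ t ∈ Set.Icc (0:ℝ) T, 0 ≤ f t)
    (hf0 : f 0 ≤ (α * b) ^ (-(1/(α - 1))))
    (hineq : ∀ t ∈ Set.Icc (0:ℝ) T, f t ≤ a + b * f t ^ α) :
    ∀ t ∈ Set.Icc (0:ℝ) T, f t ≤ (α/(α - 1)) * a := by
  intro t ht
  refine le_of_le_threshold hα hb (hnonneg t ht) ?_ (hineq t ht)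
  by_contra! hlt
  obtain ⟨s, hs, hfs⟩ := intermediate_value_Icc ht.1
    (hcont.mono (Set.Icc_subset_Icc_right ht.2)) ⟨hf0, hlt.le⟩
  have hsT : s ∈ Set.Icc (0:ℝ) T := ⟨hs.1, hs.2.trans ht.2⟩
  have hle := le_of_le_threshold hα hb (hnonneg s hsT) hfs.le (hineq s hsT)
  rw [hfs] at hle
  have hα1 : 0 < α - 1 := by linarith
  have hα0 : 0 < α := by linarith
  have hgap : (α/(α - 1)) * a < (α * b) ^ (-(1/(α - 1))) := by
    calc (α/(α - 1)) * a < (α/(α - 1)) * ((1 - 1/α) * (α * b) ^ (-(1/(α - 1)))) := by gcongr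
      _ = (α/(α - 1) * (1 - 1/α)) * (α * b) ^ (-(1/(α - 1))) := by ring
      _ = (α * b) ^ (-(1/(α - 1))) := by
          have hone : α/(α - 1) * (1 - 1/α) = 1 := by
            field_simp
          rw [hone, one_mul]
  linarith
end

section
/- Let n ≥ 1 be a natural number, t ∈ [0,1), s = t/(1−t), and let u : ℝⁿ → ℂ be a Schwartz function. Let ũ_t be the pseudo-conformal transform of u at time t. Then 4 ∫_{ℝⁿ} |∇ũ_t(x)|² dx = ∫_{ℝⁿ} Σ_{j=1}^n |x_j·u(x) − 2i(1+s)·∂_j u(x)|² dx. -/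
open MeasureTheory

/-!
Write `a = 1 - t`, so that `1 + s = a⁻¹`, and put `y = a⁻¹ x`. The chain rule gives
`∂_j ũ_t(x) = a^(-n/2) e^{i|x|²/(4a)} · (i/2) · (y_j u(y) - 2 i a⁻¹ ∂_j u(y))`
(`fderiv_pseudoConformal_single`). The exponential is unimodular, so `4 |∂_j ũ_t(x)|²` is `a^(-n)`
times the right-hand integrand evaluated at `y`, and the factor `a^(-n)` is absorbed by the
change of variables `x = a y`.
-/

/-- The derivative of the Gaussian phase and that of the dilated function combine into a multiple of
`y_j u(y) - 2 i a⁻¹ ∂_j u(y)` at `y = a⁻¹ x`. -/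
lemma fderiv_pseudoConformal_single {n : ℕ} {a : ℝ} (ha : a ≠ 0) (c : ℂ)
    {u : EuclideanSpace ℝ (Fin n) → ℂ} (hu : Differentiable ℝ u)
    (x : EuclideanSpace ℝ (Fin n)) (j : Fin n) :
    fderiv ℝ (fun x => c * Complex.exp (Complex.I * ((‖x‖ ^ 2 / (4 * a) : ℝ) : ℂ)) *
        u (a⁻¹ • x)) x (EuclideanSpace.single j 1) =
      c * Complex.exp (Complex.I * ((‖x‖ ^ 2 / (4 * a) : ℝ) : ℂ)) * (Complex.I / 2) *
        ((((a⁻¹ • x) j : ℝ) : ℂ) * u (a⁻¹ • x) - 2 * Complex.I * ((a⁻¹ : ℝ) : ℂ) *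
          fderiv ℝ u (a⁻¹ • x) (EuclideanSpace.single j 1)) := by
  have h1 : HasFDerivAt (fun x : EuclideanSpace ℝ (Fin n) => ‖x‖ ^ 2) (2 • innerSL ℝ x) x :=
    (hasStrictFDerivAt_norm_sq x).hasFDerivAt
  have h2 := (((Complex.ofRealCLM.hasFDerivAt.comp x
    (h1.mul_const ((4 * a)⁻¹))).const_mul Complex.I).cexp).const_mul c
  have h3 : HasFDerivAt (fun x : EuclideanSpace ℝ (Fin n) => u (a⁻¹ • x)) _ x :=
    (hu (a⁻¹ • x)).hasFDerivAt.comp x ((hasFDerivAt_id x).const_smul a⁻¹)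
  have h4 := (h2.mul h3).fderiv
  simp only [Function.comp_def, Complex.ofRealCLM_apply, ← div_eq_mul_inv] at h4
  have ha' : (a : ℂ) ≠ 0 := by exact_mod_cast ha
  erw [h4]
  simp [EuclideanSpace.inner_single_right]
  field_simp
  linear_combination (8 * c * fderiv ℝ u ((1 / a) • x) (EuclideanSpace.single j 1)) * Complex.I_sq

/-- For a Schwartz function `u` and its pseudo-conformal transform `ũ_t` at time
`t ∈ [0,1)`, with `s = t/(1−t)`, the kinetic energy identity
`4∫|∇ũ_t|² = ∫ Σ_j |x_j u − 2i(1+s) ∂_j u|²` holds. -/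
theorem stmt10 (n : ℕ) (hn : 1 ≤ n) (t s : ℝ) (ht : t ∈ Set.Ico (0:ℝ) 1)
    (hs : s = t / (1 - t))
    (u : SchwartzMap (EuclideanSpace ℝ (Fin n)) ℂ)
    (ut : EuclideanSpace ℝ (Fin n) → ℂ)
    (hut : ∀ x, ut x =
      (((1 - t) ^ (-((n : ℝ)/2)) : ℝ) : ℂ) *
        Complex.exp (Complex.I * ((‖x‖^2 / (4*(1 - t)) : ℝ) : ℂ)) *
        u ((1 - t)⁻¹ • x)) :
    4 * ∫ x, ∑ j : Fin n, ‖fderiv ℝ ut x (EuclideanSpace.single j 1)‖^2 =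
      ∫ x, ∑ j : Fin n,
        ‖((x j : ℝ) : ℂ) * u x -
          2 * Complex.I * (((1 + s : ℝ)) : ℂ) *
            fderiv ℝ (⇑u) x (EuclideanSpace.single j 1)‖^2 := by
  obtain ⟨-, ht1⟩ := ht
  have ha : 0 < 1 - t := by linarith
  have hs' : 1 + s = (1 - t)⁻¹ := by
    rw [hs]
    field_simp
    ring
  have hc : ((1 - t) ^ (-((n : ℝ) / 2))) ^ 2 = ((1 - t) ^ n)⁻¹ := by
    rw [← Real.rpow_natCast, ← Real.rpow_mul ha.le, ← Real.rpow_natCast, ← Real.rpow_neg ha.le]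
    congr 1
    push_cast
    ring
  obtain rfl : ut = _ := funext hut
  rw [hs', ← integral_const_mul]
  set G : EuclideanSpace ℝ (Fin n) → ℝ := fun x => ∑ j : Fin n,
    ‖((x j : ℝ) : ℂ) * u x - 2 * Complex.I * (((1 - t)⁻¹ : ℝ) : ℂ) *
      fderiv ℝ (⇑u) x (EuclideanSpace.single j 1)‖ ^ 2 with hG
  have key : ∀ x, 4 * ∑ j : Fin n, ‖fderiv ℝ (fun x : EuclideanSpace ℝ (Fin n) =>
      (((1 - t) ^ (-((n : ℝ)/2)) : ℝ) : ℂ) *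
        Complex.exp (Complex.I * ((‖x‖^2 / (4*(1 - t)) : ℝ) : ℂ)) *
        u ((1 - t)⁻¹ • x)) x (EuclideanSpace.single j 1)‖ ^ 2 =
      ((1 - t) ^ n)⁻¹ * G ((1 - t)⁻¹ • x) := by
    intro x
    rw [hG, Finset.mul_sum, Finset.mul_sum]
    refine Finset.sum_congr rfl fun j _ => ?_
    have hI : ‖Complex.I / 2‖ = 1 / 2 := by simp
    rw [fderiv_pseudoConformal_single ha.ne' _ u.differentiable, norm_mul, norm_mul, norm_mul,
      mul_comm Complex.I (Complex.ofReal _), Complex.norm_exp_ofReal_mul_I, hI,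
      Complex.norm_real, mul_pow, mul_pow, mul_pow, Real.norm_eq_abs, sq_abs, hc]
    ring
  simp_rw [key]
  rw [integral_const_mul, Measure.integral_comp_inv_smul, finrank_euclideanSpace_fin,
    abs_of_pos (pow_pos ha n), smul_eq_mul, inv_mul_cancel_left₀ (pow_pos ha n).ne']
end

section
/- Let n ≥ 1 be a natural number and let u : ℝⁿ → ℂ be a Schwartz function. Then −2·Re ∫_{ℝⁿ} (x·∇u)(x) · conj(Δu(x)) dx = (2 − n) ∫_{ℝⁿ} |∇u(x)|² dx. -/
open MeasureTheory

/-!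
With the real bilinear form `⟪z, w⟫ = Re (z * conj w)` on `ℂ` and `∂ₖ` the `k`-th partial derivative,
integration by parts in the `k`-th direction together with `∂ₖ (xⱼ f) = δⱼₖ f + xⱼ ∂ₖ f` and
`∂ₖ ∂ⱼ u = ∂ⱼ ∂ₖ u` gives
`∫ ⟪xⱼ ∂ⱼu, ∂ₖ∂ₖu⟫ = -δⱼₖ ∫ |∂ₖu|² - ∫ ⟪xⱼ ∂ⱼ∂ₖu, ∂ₖu⟫`, the case `f = ∂ⱼu`, `g = ∂ₖu` of
`integral_inner_coordMul_partial`.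
The last integral equals `-(1/2) ∫ |∂ₖu|²`, because `2 ⟪∂ⱼf, f⟫ = ∂ⱼ |f|²` and `∂ⱼ xⱼ = 1`
(`integral_inner_coordMul_self`). Summing over `j` and `k` yields `(n / 2 - 1) ∫ |∇u|²`
for `Re ∫ (x·∇u) conj(Δu)`.
-/

namespace Virial

open SchwartzMap LineDeriv

variable {n : ℕ}

/-- The partial derivative `∂ⱼ f`, as a Schwartz function. -/
noncomputable def partialD (j : Fin n) (f : SchwartzMap (EuclideanSpace ℝ (Fin n)) ℂ) :
    SchwartzMap (EuclideanSpace ℝ (Fin n)) ℂ :=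
  ∂_{(EuclideanSpace.single j (1 : ℝ) : EuclideanSpace ℝ (Fin n))} f

/-- The product `xⱼ f` with the `j`-th coordinate function, as a Schwartz function. -/
noncomputable def coordMul (j : Fin n) (f : SchwartzMap (EuclideanSpace ℝ (Fin n)) ℂ) :
    SchwartzMap (EuclideanSpace ℝ (Fin n)) ℂ :=
  smulLeftCLM ℂ (⇑(EuclideanSpace.proj j : EuclideanSpace ℝ (Fin n) →L[ℝ] ℝ)) f

lemma partialD_apply (j : Fin n) (f : SchwartzMap (EuclideanSpace ℝ (Fin n)) ℂ)
    (x : EuclideanSpace ℝ (Fin n)) :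
    partialD j f x = fderiv ℝ f x (EuclideanSpace.single j 1) :=
  lineDerivOp_apply_eq_fderiv _ _ _

lemma coordMul_apply (j : Fin n) (f : SchwartzMap (EuclideanSpace ℝ (Fin n)) ℂ)
    (x : EuclideanSpace ℝ (Fin n)) :
    coordMul j f x = x j • f x := by
  rw [coordMul, smulLeftCLM_apply_apply (by fun_prop)]
  simp

lemma partialD_coordMul (j k : Fin n) (f : SchwartzMap (EuclideanSpace ℝ (Fin n)) ℂ)
    (x : EuclideanSpace ℝ (Fin n)) :
    partialD k (coordMul j f) x = (if j = k then f x else 0) + x j • partialD k f x := by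
  rw [partialD_apply, partialD_apply]
  have h : (⇑(coordMul j f) : EuclideanSpace ℝ (Fin n) → ℂ) =
      fun y => (EuclideanSpace.proj j : EuclideanSpace ℝ (Fin n) →L[ℝ] ℝ) y • f y := by
    ext y
    simp [coordMul_apply]
  rw [h, fderiv_fun_smul (by fun_prop) f.differentiableAt, ContinuousLinearMap.fderiv]
  by_cases hjk : j = k
  · simp [hjk, add_comm]
  · simp [hjk]

lemma partialD_comm (j k : Fin n) (f : SchwartzMap (EuclideanSpace ℝ (Fin n)) ℂ) :
    partialD j (partialD k f) = partialD k (partialD j f) := by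
  ext x
  have h2 : ContDiff ℝ 2 f := f.smooth 2
  have hd : DifferentiableAt ℝ (fderiv ℝ f) x :=
    (h2.fderiv_right (m := 1) (by norm_num)).differentiable (by norm_num) x
  have key : ∀ a b : Fin n, partialD a (partialD b f) x =
      fderiv ℝ (fderiv ℝ f) x (EuclideanSpace.single a 1) (EuclideanSpace.single b 1) := by
    intro a b
    have h : (⇑(partialD b f) : EuclideanSpace ℝ (Fin n) → ℂ) =
        fun y => fderiv ℝ f y (EuclideanSpace.single b 1) := funext (partialD_apply b f)
    rw [partialD_apply, h, fderiv_clm_apply hd (differentiableAt_const _)]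
    simp
  rw [key, key]
  exact (h2.contDiffAt.isSymmSndFDerivAt (by simp)).eq _ _

lemma integrable_inner (f g : SchwartzMap (EuclideanSpace ℝ (Fin n)) ℂ) :
    Integrable (fun x => inner ℝ (f x) (g x)) :=
  (bilinLeftCLM (innerSL ℝ) g.hasTemperateGrowth f).integrable

lemma integral_inner_partialD (f g : SchwartzMap (EuclideanSpace ℝ (Fin n)) ℂ) (k : Fin n) :
    ∫ x, inner ℝ (f x) (partialD k g x) = -∫ x, inner ℝ (partialD k f x) (g x) :=
  integral_bilinear_lineDerivOp_right_eq_neg_left f g (innerSL ℝ) _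

lemma integral_inner_coordMul_partial (f g : SchwartzMap (EuclideanSpace ℝ (Fin n)) ℂ)
    (j k : Fin n) :
    ∫ x, inner ℝ (coordMul j f x) (partialD k g x) =
      -(if j = k then ∫ x, inner ℝ (f x) (g x) else 0) -
        ∫ x, inner ℝ (coordMul j (partialD k f) x) (g x) := by
  rw [integral_inner_partialD]
  have h : ∀ x, inner ℝ (partialD k (coordMul j f) x) (g x) =
      (if j = k then inner ℝ (f x) (g x) else 0) +
        inner ℝ (coordMul j (partialD k f) x) (g x) := by
    intro x
    rw [partialD_coordMul, coordMul_apply, inner_add_left]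
    split_ifs <;> simp
  simp_rw [h]
  split_ifs
  · rw [integral_add (integrable_inner _ _) (integrable_inner _ _)]
    ring
  · simp

lemma integral_inner_coordMul_self (f : SchwartzMap (EuclideanSpace ℝ (Fin n)) ℂ) (j : Fin n) :
    2 * ∫ x, inner ℝ (coordMul j (partialD j f) x) (f x) = -∫ x, ‖f x‖ ^ 2 := by
  have h := integral_inner_coordMul_partial f f j j
  have hs : ∀ x, inner ℝ (coordMul j f x) (partialD j f x) =
      inner ℝ (coordMul j (partialD j f) x) (f x) := by
    intro x
    rw [coordMul_apply, coordMul_apply, real_inner_smul_left, real_inner_smul_left,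
      real_inner_comm]
  simp_rw [hs, real_inner_self_eq_norm_sq] at h
  simp only [if_true] at h
  linarith

lemma two_mul_integral_inner_term (u : SchwartzMap (EuclideanSpace ℝ (Fin n)) ℂ) (j k : Fin n) :
    -2 * ∫ x, inner ℝ (coordMul j (partialD j u) x) (partialD k (partialD k u) x) =
      (if j = k then 2 * ∫ x, ‖partialD k u x‖ ^ 2 else 0) - ∫ x, ‖partialD k u x‖ ^ 2 := by
  rw [integral_inner_coordMul_partial, partialD_comm k j]
  have h := integral_inner_coordMul_self (partialD k u) j
  split_ifs with hjk
  · subst hjk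
    simp_rw [real_inner_self_eq_norm_sq]
    linarith
  · linarith

lemma re_integral_mul_conj (f g : SchwartzMap (EuclideanSpace ℝ (Fin n)) ℂ) :
    (∫ x, f x * (starRingEnd ℂ) (g x)).re = ∫ x, inner ℝ (f x) (g x) := by
  -- Conjugation does not change the norm, so the product `f * g` of Schwartz functions dominates.
  have hi : Integrable (fun x => f x * (starRingEnd ℂ) (g x)) := by
    refine (bilinLeftCLM (ContinuousLinearMap.mul ℝ ℂ) g.hasTemperateGrowth f).integrable.mono
      ?_ (.of_forall fun x => ?_)
    · exact (f.continuous.mul (Complex.continuous_conj.comp g.continuous)).aestronglyMeasurable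
    · simp [bilinLeftCLM_apply]
  have h := Complex.reCLM.integral_comp_comm hi
  simp only [Complex.reCLM_apply] at h
  rw [← h]
  refine integral_congr_ae (.of_forall fun x => ?_)
  simp [Complex.inner, mul_comm]

end Virial

open Virial in
/-- Virial integration-by-parts identity:
`−2 Re ∫ (x·∇u) conj(Δu) = (2 − n) ∫ |∇u|²` for Schwartz `u`. -/
theorem stmt12 (n : ℕ) (hn : 1 ≤ n)
    (u : SchwartzMap (EuclideanSpace ℝ (Fin n)) ℂ) :
    -2 * (∫ x : EuclideanSpace ℝ (Fin n),
        (∑ j : Fin n, ((x j : ℝ) : ℂ) * fderiv ℝ (⇑u) x (EuclideanSpace.single j 1)) *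
          (starRingEnd ℂ) (∑ j : Fin n,
            fderiv ℝ (fun y => fderiv ℝ (⇑u) y (EuclideanSpace.single j 1)) x
              (EuclideanSpace.single j 1))).re =
      (2 - (n : ℝ)) * ∫ x : EuclideanSpace ℝ (Fin n),
        ∑ j : Fin n, ‖fderiv ℝ (⇑u) x (EuclideanSpace.single j 1)‖^2 := by
  have hsq : ∀ k, Integrable (fun x => ‖partialD k u x‖ ^ 2) := fun k => by
    simpa only [real_inner_self_eq_norm_sq] using integrable_inner (partialD k u) (partialD k u)
  have h1 : ∀ x : EuclideanSpace ℝ (Fin n),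
      ∑ j : Fin n, ((x j : ℝ) : ℂ) * fderiv ℝ (⇑u) x (EuclideanSpace.single j 1) =
        (∑ j, coordMul j (partialD j u)) x := by
    intro x
    simp [coordMul_apply, partialD_apply]
  have h2 : ∀ x : EuclideanSpace ℝ (Fin n),
      ∑ j : Fin n, fderiv ℝ (fun y => fderiv ℝ (⇑u) y (EuclideanSpace.single j 1)) x
        (EuclideanSpace.single j 1) = (∑ j, partialD j (partialD j u)) x := by
    intro x
    simp_rw [← partialD_apply]
    simp [partialD_apply]
  simp_rw [h1, h2, ← partialD_apply]
  rw [re_integral_mul_conj]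
  simp_rw [sum_apply, sum_inner, inner_sum]
  rw [integral_finsetSum _ fun j _ => integrable_finsetSum _ fun k _ => integrable_inner _ _,
    integral_finsetSum _ fun k _ => hsq k]
  simp_rw [integral_finsetSum Finset.univ fun k _ => integrable_inner _ (partialD k (partialD k u)),
    Finset.mul_sum, two_mul_integral_inner_term, Finset.sum_sub_distrib]
  simp [← Finset.mul_sum]
  ring
end

section
/- Let n ≥ 1 be a natural number, σ > 0 a real number, and let u : ℝⁿ → ℂ be a Schwartz function. Then 2·Re ∫_{ℝⁿ} |u(x)|^{2σ} · conj(u(x)) · (x·∇u)(x) dx = −(n/(σ+1)) ∫_{ℝⁿ} |u(x)|^{2σ+2} dx. -/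
open MeasureTheory

/-!
Write `g = |u|^{2σ+2}`. Since `2σ + 2 > 1`, `g` is differentiable even where `u` vanishes, with
`∂_j g = (2σ+2) |u|^{2σ} Re (conj u ∂_j u)`. Integrating by parts coordinate by coordinate gives
`∫ x_j ∂_j g = -∫ g`, and summing over the `n` coordinates yields the identity. All integrals
converge because `u` is bounded and `|x|^k |u|`, `|x|^k |∇u|` are integrable for Schwartz `u`
(`integrable_virial`, `integrable_pow_mul_norm_rpow`).
-/

lemma exists_norm_rpow_le {n : ℕ} (u : SchwartzMap (EuclideanSpace ℝ (Fin n)) ℂ) {s : ℝ}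
    (hs : 0 ≤ s) : ∃ C : ℝ, ∀ x, ‖u x‖ ^ s ≤ C :=
  ⟨(SchwartzMap.seminorm ℝ 0 0 u) ^ s, fun x =>
    Real.rpow_le_rpow (norm_nonneg _) (SchwartzMap.norm_le_seminorm ℝ u x) hs⟩

lemma integrable_pow_mul_norm_rpow {n : ℕ} (u : SchwartzMap (EuclideanSpace ℝ (Fin n)) ℂ) {s : ℝ}
    (hs : 0 ≤ s) (k : ℕ) :
    Integrable (fun x : EuclideanSpace ℝ (Fin n) => ‖x‖ ^ k * ‖u x‖ ^ (s + 1)) := by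
  obtain ⟨C, hC⟩ := exists_norm_rpow_le u hs
  refine ((u.integrable_pow_mul volume k).const_mul C).mono' ?_ (.of_forall fun x => ?_)
  · have hu := u.continuous
    have : Continuous fun x => ‖u x‖ ^ (s + 1) :=
      hu.norm.rpow_const fun x => Or.inr (by linarith)
    exact (by fun_prop : Continuous _).aestronglyMeasurable
  · rw [Real.norm_of_nonneg (by positivity), Real.rpow_add_one' (norm_nonneg _) (by linarith)]
    have := mul_le_mul_of_nonneg_right (hC x) (by positivity : 0 ≤ ‖x‖ ^ k * ‖u x‖)
    linarith

/-- The `j`-th summand `|u|^{2σ} conj(u) x_j ∂_j u` of the virial integrand is integrable. -/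
lemma integrable_virial {n : ℕ} {σ : ℝ} (hσ : 0 < σ)
    (u : SchwartzMap (EuclideanSpace ℝ (Fin n)) ℂ) (j : Fin n) :
    Integrable (fun x : EuclideanSpace ℝ (Fin n) =>
      ((‖u x‖ ^ (2*σ) : ℝ) : ℂ) * (starRingEnd ℂ) (u x) *
        (((x j : ℝ) : ℂ) * fderiv ℝ (⇑u) x (EuclideanSpace.single j 1))) := by
  obtain ⟨C, hC⟩ := exists_norm_rpow_le u (by linarith : 0 ≤ 2 * σ + 1)
  refine ((u.integrable_pow_mul_iteratedFDeriv volume 1 1).const_mul C).mono' ?_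
    (.of_forall fun x => ?_)
  · have hu := u.continuous
    have h1 : Continuous fun x => ‖u x‖ ^ (2 * σ) :=
      hu.norm.rpow_const fun x => Or.inr (by linarith)
    have h2 : Continuous (fderiv ℝ u) := (u.smooth 1).continuous_fderiv one_ne_zero
    have h3 : Continuous fun x => (starRingEnd ℂ) (u x) := Complex.continuous_conj.comp hu
    exact (by fun_prop : Continuous _).aestronglyMeasurable
  · have hx : ‖x j‖ ≤ ‖x‖ := PiLp.norm_apply_le x j
    have hd : ‖fderiv ℝ u x (EuclideanSpace.single j 1)‖ ≤ ‖fderiv ℝ u x‖ := by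
      simpa using (fderiv ℝ u x).le_opNorm (EuclideanSpace.single j 1)
    have h := hC x
    rw [Real.rpow_add_one' (norm_nonneg _) (by linarith)] at h
    rw [norm_iteratedFDeriv_one, pow_one]
    simp only [norm_mul, Complex.norm_real, RCLike.norm_conj]
    rw [Real.norm_of_nonneg (by positivity : 0 ≤ ‖u x‖ ^ (2 * σ))]
    gcongr
    exact (by positivity : (0:ℝ) ≤ _).trans h

lemma fderiv_norm_rpow_apply {n : ℕ} {σ : ℝ} (hσ : 0 < σ)
    (u : SchwartzMap (EuclideanSpace ℝ (Fin n)) ℂ) (x v : EuclideanSpace ℝ (Fin n)) :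
    fderiv ℝ (fun y => ‖u y‖ ^ (2 * σ + 2)) x v =
      (2 * σ + 2) *
        (((‖u x‖ ^ (2*σ) : ℝ) : ℂ) * (starRingEnd ℂ) (u x) * fderiv ℝ (⇑u) x v).re := by
  rw [u.differentiable.fderiv_norm_rpow (by linarith), mul_assoc, Complex.re_ofReal_mul]
  simp [Complex.inner]
  ring

lemma coord_virial {n : ℕ} {σ : ℝ} (hσ : 0 < σ)
    (u : SchwartzMap (EuclideanSpace ℝ (Fin n)) ℂ) (j : Fin n) :
    (2 * σ + 2) * (∫ x : EuclideanSpace ℝ (Fin n),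
      ((‖u x‖ ^ (2*σ) : ℝ) : ℂ) * (starRingEnd ℂ) (u x) *
        (((x j : ℝ) : ℂ) * fderiv ℝ (⇑u) x (EuclideanSpace.single j 1))).re =
      - ∫ x : EuclideanSpace ℝ (Fin n), ‖u x‖ ^ (2*σ + 2) := by
  have hF := integrable_virial hσ u j
  have key : ∀ x : EuclideanSpace ℝ (Fin n),
      x j * fderiv ℝ (fun y => ‖u y‖ ^ (2 * σ + 2)) x (EuclideanSpace.single j 1) =
      (2 * σ + 2) * (((‖u x‖ ^ (2*σ) : ℝ) : ℂ) * (starRingEnd ℂ) (u x) *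
        (((x j : ℝ) : ℂ) * fderiv ℝ (⇑u) x (EuclideanSpace.single j 1))).re := by
    intro x
    rw [fderiv_norm_rpow_apply hσ, mul_left_comm _ ((x j : ℝ) : ℂ), Complex.re_ofReal_mul]
    ring
  have hcoord : ∀ x : EuclideanSpace ℝ (Fin n),
      HasFDerivAt (fun y : EuclideanSpace ℝ (Fin n) => y j)
        (EuclideanSpace.proj j : EuclideanSpace ℝ (Fin n) →L[ℝ] ℝ) x :=
    fun x => (EuclideanSpace.proj j : EuclideanSpace ℝ (Fin n) →L[ℝ] ℝ).hasFDerivAt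
  have hd1 : ∀ x : EuclideanSpace ℝ (Fin n),
      fderiv ℝ (fun y : EuclideanSpace ℝ (Fin n) => y j) x (EuclideanSpace.single j 1) = 1 := by
    intro x
    rw [(hcoord x).fderiv]
    simp
  have e : 2 * σ + 2 = (2 * σ + 1) + 1 := by ring
  have hdiff : Differentiable ℝ (fun y => ‖u y‖ ^ (2 * σ + 2)) :=
    u.differentiable.norm_rpow (by linarith)
  have ibp := integral_mul_fderiv_eq_neg_fderiv_mul_of_integrable
    (μ := (volume : Measure (EuclideanSpace ℝ (Fin n))))
    (f := fun y : EuclideanSpace ℝ (Fin n) => y j) (g := fun y => ‖u y‖ ^ (2 * σ + 2))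
    (v := EuclideanSpace.single j 1)
    (by
      simp only [hd1, one_mul]
      rw [e]
      simpa using integrable_pow_mul_norm_rpow u (by linarith : 0 ≤ 2 * σ + 1) 0)
    (by
      simp only [key]
      exact hF.re.const_mul _)
    (by
      refine (integrable_pow_mul_norm_rpow u (by linarith : 0 ≤ 2 * σ + 1) 1).mono' ?_
        (.of_forall fun x => ?_)
      · have := hdiff.continuous
        exact (by fun_prop : Continuous _).aestronglyMeasurable
      · rw [norm_mul, pow_one, ← e, Real.norm_of_nonneg (by positivity : 0 ≤ ‖u x‖ ^ (2 * σ + 2))]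
        gcongr
        exact PiLp.norm_apply_le x j)
    (fun x _ => (hcoord x).differentiableAt) (fun x _ => hdiff x)
  simp only [hd1, one_mul, key] at ibp
  rw [integral_const_mul] at ibp
  rw [← ibp]
  congr 1
  exact (integral_re hF).symm

/-- Potential-energy virial identity:
`2 Re ∫ |u|^{2σ} conj(u) (x·∇u) = −(n/(σ+1)) ∫ |u|^{2σ+2}` for Schwartz `u`. -/
theorem stmt13 (n : ℕ) (hn : 1 ≤ n) (σ : ℝ) (hσ : 0 < σ)
    (u : SchwartzMap (EuclideanSpace ℝ (Fin n)) ℂ) :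
    2 * (∫ x : EuclideanSpace ℝ (Fin n),
        ((‖u x‖ ^ (2*σ) : ℝ) : ℂ) * (starRingEnd ℂ) (u x) *
          ∑ j : Fin n, ((x j : ℝ) : ℂ) * fderiv ℝ (⇑u) x (EuclideanSpace.single j 1)).re =
      -((n : ℝ)/(σ + 1)) * ∫ x : EuclideanSpace ℝ (Fin n), ‖u x‖ ^ (2*σ + 2) := by
  simp_rw [Finset.mul_sum]
  rw [integral_finsetSum _ fun j _ => integrable_virial hσ u j, Complex.re_sum]
  have h : ∀ j : Fin n, _ = _ := fun j => eq_div_of_mul_eq (by positivity : 2 * σ + 2 ≠ 0)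
    ((mul_comm _ _).trans (coord_virial hσ u j))
  rw [Finset.sum_congr rfl fun j _ => h j]
  simp only [Finset.sum_const, Finset.card_univ, Fintype.card_fin, nsmul_eq_mul]
  have : σ + 1 ≠ 0 := by positivity
  rw [show 2 * σ + 2 = 2 * (σ + 1) by ring]
  field_simp
end

section
/- Let (Ω, ℱ, ℙ) be a probability space, let β > 0, C ≥ 0 and p ≥ 1 be real numbers, and let Z : [1,∞) × Ω → [0,∞) be a function such that s ↦ Z(s,ω) is continuous for every ω ∈ Ω, ω ↦ sup_{s ≥ t} Z(s,ω)^p is measurable for every t ≥ 1, and 𝔼[sup_{s ≥ t} Z(s,·)^p] ≤ C·t^{−β} for every t ≥ 1. Then for ℙ-almost every ω there exists s₀ ≥ 4 such that Z(s,ω)^p ≤ (s/2)^{−β}·(log₂ s)² for all s ≥ s₀. -/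
/-!
Put `M t = sup_{s ≥ t} Z(s)^p` and sample it at the dyadic times `t = 2^m`. Markov's inequality gives
`P(M (2^m) ≥ (2^m)^{-β} m²) ≤ C / m²`, which is summable, so by Borel–Cantelli almost surely
`M (2^m) < (2^m)^{-β} m²` for all large `m`. For `s` in the dyadic block `[2^m, 2^(m+1))` one has
`Z(s)^p ≤ M (2^m)`, `s / 2 < 2^m` and `m ≤ log₂ s`, and the claimed bound follows by monotonicity.
-/

open MeasureTheory

/-- Markov/Borel–Cantelli upgrade: a uniform moment bound
`𝔼[sup_{s ≥ t} Z(s)^p] ≤ C t^{−β}` yields an almost sure pathwise decay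
`Z(s,ω)^p ≤ (s/2)^{−β} (log₂ s)²` for all large `s`. -/
theorem stmt16 {Ω : Type*} [MeasurableSpace Ω] (P : Measure Ω)
    [IsProbabilityMeasure P] (β C p : ℝ) (hβ : 0 < β) (hC : 0 ≤ C) (hp : 1 ≤ p)
    (Z : ℝ → Ω → ℝ)
    (hZnonneg : ∀ s, 1 ≤ s → ∀ ω, 0 ≤ Z s ω)
    (hZcont : ∀ ω, ContinuousOn (fun s => Z s ω) (Set.Ici (1:ℝ)))
    (hmeas : ∀ t, 1 ≤ t →
      Measurable (fun ω => ⨆ s ∈ Set.Ici t, ENNReal.ofReal (Z s ω ^ p)))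
    (hmoment : ∀ t, 1 ≤ t →
      ∫⁻ ω, (⨆ s ∈ Set.Ici t, ENNReal.ofReal (Z s ω ^ p)) ∂P ≤
        ENNReal.ofReal (C * t ^ (-β))) :
    ∀ᵐ ω ∂P, ∃ s₀, 4 ≤ s₀ ∧ ∀ s, s₀ ≤ s →
      Z s ω ^ p ≤ (s/2) ^ (-β) * (Real.logb 2 s)^2 := by
  let M : ℝ → Ω → ENNReal := fun t ω => ⨆ s ∈ Set.Ici t, ENNReal.ofReal (Z s ω ^ p)
  -- The index is shifted to `m = n + 1` so that the threshold is never zero.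
  let A : ℕ → Set Ω := fun n =>
    {ω | ENNReal.ofReal (((2:ℝ) ^ (n + 1)) ^ (-β) * ((n:ℝ) + 1) ^ 2) ≤ M (2 ^ (n + 1)) ω}
  have hA : ∀ n, P (A n) ≤ ENNReal.ofReal (C * (1 / ((n:ℝ) + 1) ^ 2)) := by
    intro n
    have h1 : (1:ℝ) ≤ 2 ^ (n + 1) := one_le_pow₀ (by norm_num)
    have ha : (0:ℝ) < ((2:ℝ) ^ (n + 1)) ^ (-β) := Real.rpow_pos_of_pos (by positivity) _
    have hpos : (0:ℝ) < ((2:ℝ) ^ (n + 1)) ^ (-β) * ((n:ℝ) + 1) ^ 2 := by positivity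
    calc P (A n) ≤ (∫⁻ ω, M (2 ^ (n + 1)) ω ∂P) /
          ENNReal.ofReal (((2:ℝ) ^ (n + 1)) ^ (-β) * ((n:ℝ) + 1) ^ 2) :=
          meas_ge_le_lintegral_div (hmeas _ h1).aemeasurable
            (by simpa using hpos) ENNReal.ofReal_ne_top
      _ ≤ ENNReal.ofReal (C * ((2:ℝ) ^ (n + 1)) ^ (-β)) /
          ENNReal.ofReal (((2:ℝ) ^ (n + 1)) ^ (-β) * ((n:ℝ) + 1) ^ 2) := by
          gcongr
          exact hmoment _ h1
      _ = ENNReal.ofReal (C * (1 / ((n:ℝ) + 1) ^ 2)) := by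
          rw [← ENNReal.ofReal_div_of_pos hpos]
          congr 1
          field_simp
  have hsum : ∑' n, P (A n) ≠ ⊤ := by
    have hs : Summable fun n : ℕ => C * (1 / ((n:ℝ) + 1) ^ 2) := by
      have h := (summable_nat_add_iff 1).2
        (Real.summable_one_div_nat_pow.2 (by norm_num : 1 < 2))
      simpa using h.mul_left C
    exact ne_top_of_le_ne_top hs.tsum_ofReal_ne_top (ENNReal.tsum_le_tsum hA)
  filter_upwards [ae_eventually_notMem hsum] with ω hω
  obtain ⟨N, hN⟩ := Filter.eventually_atTop.1 hω
  refine ⟨max 4 (2 ^ (N + 1)), le_max_left _ _, fun s hs => ?_⟩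
  have hs4 : 4 ≤ s := (le_max_left _ _).trans hs
  have hsN : 2 ^ (N + 1) ≤ s := (le_max_right _ _).trans hs
  obtain ⟨k, hk1, hk2⟩ := exists_nat_pow_near (by linarith : 1 ≤ s) (by norm_num : (1:ℝ) < 2)
  have hNk : N + 1 < k + 1 :=
    (pow_lt_pow_iff_right₀ (by norm_num : (1:ℝ) < 2)).1 (hsN.trans_lt hk2)
  obtain ⟨n, rfl⟩ : ∃ n, k = n + 1 := ⟨k - 1, by omega⟩
  have hn : M (2 ^ (n + 1)) ω <
      ENNReal.ofReal (((2:ℝ) ^ (n + 1)) ^ (-β) * ((n:ℝ) + 1) ^ 2) :=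
    not_le.1 (hN n (by omega))
  have hZM : ENNReal.ofReal (Z s ω ^ p) ≤ M (2 ^ (n + 1)) ω :=
    le_iSup₂ (f := fun s (_ : s ∈ Set.Ici ((2:ℝ) ^ (n + 1))) => ENNReal.ofReal (Z s ω ^ p)) s hk1
  have hZ : Z s ω ^ p ≤ ((2:ℝ) ^ (n + 1)) ^ (-β) * ((n:ℝ) + 1) ^ 2 :=
    (ENNReal.ofReal_le_ofReal_iff (by positivity)).1 (hZM.trans hn.le)
  have hlog : (n:ℝ) + 1 ≤ Real.logb 2 s := by
    rw [Real.le_logb_iff_rpow_le (by norm_num) (by linarith)]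
    exact_mod_cast hk1
  have hpow : ((2:ℝ) ^ (n + 1)) ^ (-β) ≤ (s / 2) ^ (-β) := by
    apply Real.rpow_le_rpow_of_nonpos (by linarith) _ (by linarith)
    rw [pow_succ] at hk2
    linarith
  have hs2 : 0 ≤ (s / 2) ^ (-β) := Real.rpow_nonneg (by linarith) _
  exact hZ.trans (by gcongr)
end
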